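/- arXiv:1412.6265 — 2 statements merged into one kernel-verified Lean document; each statement's English description precedes it below -/
import Mathlib

section
/- Generalized Sauer–Shelah Lemma (second inequality): Let X and Y be finite sets, let H ⊆ Y^X be a set of functions from X to Y, and let k be an integer with 2 ≤ k ≤ |Y|. Then |H| ≤ |X|^{Dim_k(H)} · |Y|^{k·Dim_k(H)} · (k−1)^{|X|}. -/
open Finset

/-- `A` is `k`-shattered by `H ⊆ Y^X`. -/
def kShatters {X Y : Type*} (H : Finset (X → Y)) (k : ℕ) (A : Finset X) : Prop :=
  ∃ Ya : X → Finset Y, (∀ a ∈ A, (Ya a).card = k) ∧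
    ∀ f : X → Y, (∀ a ∈ A, f a ∈ Ya a) → ∃ h ∈ H, ∀ a ∈ A, h a = f a

/-- The `k`-dimension of `H`: the maximal cardinality of a `k`-shattered subset of `X`. -/
noncomputable def kDim {X Y : Type*} (H : Finset (X → Y)) (k : ℕ) : ℕ :=
  sSup {d : ℕ | ∃ A : Finset X, kShatters H k A ∧ A.card = d}

/-!
As in Pajor's proof of the Sauer–Shelah lemma, one counts shattered cubes, a cube over `A` being a
product over `A` of `k`-element subsets of `Y`, and shows `|H| ≤ ∑ (k - 1) ^ |X \ A|`, the sum being
over all cubes (with base `A`) shattered by `H`. To do so, erase one coordinate `x`: a fibre of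
size `m` has `m ≤ (k - 1) + m.choose k`. The first term is charged to the cubes shattered by the
erased family; the second counts pairs of an erased function and a `k`-set `S` all of whose values
at `x` extend it in `H`, and a cube shattered by the functions paired with `S` extends by the
side `S` at `x` to a cube shattered by `H`. With `d = Dim_k H`, a shattered `A` has
`|A| ≤ d` and carries at most `|Y|.choose k ^ |A|` cubes, so
`|H| ≤ ∑ i ≤ d, |X|.choose i * |Y|.choose k ^ i * (k - 1) ^ (|X| - i)`. Finally `k! ≥ 2` makes
`|Y| ^ k ≥ 2 * |Y|.choose k`, and the factor `2 ^ d ≥ d + 1` absorbs the number of terms.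
-/

lemma le_add_choose_succ (m j : ℕ) : m ≤ j + m.choose (j + 1) := by
  induction m with
  | zero => exact Nat.zero_le _
  | succ m ih =>
    rcases lt_or_ge m j with hmj | hjm
    · exact hmj.trans_le (Nat.le_add_right _ _)
    · calc m + 1 ≤ (j + m.choose (j + 1)) + m.choose j :=
            add_le_add ih (Nat.choose_pos hjm)
        _ = j + (m + 1).choose (j + 1) := by rw [Nat.choose_succ_succ']; ring

lemma two_mul_choose_le_pow (n : ℕ) {k : ℕ} (hk : 2 ≤ k) : 2 * n.choose k ≤ n ^ k := by
  calc 2 * n.choose k ≤ k.factorial * n.choose k := by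
        gcongr
        exact hk.trans k.self_le_factorial
    _ = n.descFactorial k := (Nat.descFactorial_eq_factorial_mul_choose n k).symm
    _ ≤ n ^ k := Nat.descFactorial_le_pow n k

lemma sum_choose_mul_pow_le {n d c j : ℕ} (hdn : d ≤ n) (hc : 0 < c) (hj : 0 < j) :
    ∑ i ∈ range (d + 1), n.choose i * c ^ i * j ^ (n - i) ≤ n ^ d * (2 * c) ^ d * j ^ n := by
  have h_term : ∀ i ∈ range (d + 1),
      n.choose i * c ^ i * j ^ (n - i) ≤ n ^ d * c ^ d * j ^ n := by
    intro i hi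
    have hid : i ≤ d := mem_range_succ_iff.1 hi
    have h_choose : n.choose i ≤ n ^ d := by
      rcases n.eq_zero_or_pos with rfl | hn
      · obtain rfl : d = 0 := Nat.le_zero.1 hdn
        obtain rfl : i = 0 := Nat.le_zero.1 hid
        simp
      · exact (Nat.choose_le_pow n i).trans (Nat.pow_le_pow_right hn hid)
    gcongr
    exact Nat.sub_le n i
  calc ∑ i ∈ range (d + 1), n.choose i * c ^ i * j ^ (n - i)
      ≤ (d + 1) * (n ^ d * c ^ d * j ^ n) := by
        simpa using sum_le_card_nsmul _ _ _ h_term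
    _ ≤ 2 ^ d * (n ^ d * c ^ d * j ^ n) := by
        gcongr
        exact d.lt_two_pow_self
    _ = n ^ d * (2 * c) ^ d * j ^ n := by ring

section Dimension

variable {X Y : Type*}

lemma kShatters.card_le_kDim [Finite X] {H : Finset (X → Y)} {k : ℕ} {A : Finset X}
    (hA : kShatters H k A) : #A ≤ kDim H k := by
  cases nonempty_fintype X
  refine le_csSup ⟨Fintype.card X, ?_⟩ ⟨A, hA, rfl⟩
  rintro _ ⟨B, -, rfl⟩
  exact card_le_univ B

lemma kDim_le_card [Fintype X] (H : Finset (X → Y)) (k : ℕ) : kDim H k ≤ Fintype.card X := by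
  refine csSup_le' ?_
  rintro _ ⟨A, -, rfl⟩
  exact card_le_univ A

end Dimension

section EraseCoordinate

variable {X Y : Type*} [Fintype X] [DecidableEq X] [DecidableEq Y]

/-- The family obtained from `H` by erasing the coordinate `x`, encoded by giving every function
the same value `y₀` there. -/
def eraseCoord (H : Finset (X → Y)) (x : X) (y₀ : Y) : Finset (X → Y) :=
  H.image fun h ↦ Function.update h x y₀

lemma eraseCoord_eq_of_notMem {H : Finset (X → Y)} {x : X} {T : Finset X} {c : X → Y}
    (hH : ∀ h ∈ H, ∀ z ∉ insert x T, h z = c z) :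
    ∀ g ∈ eraseCoord H x (c x), ∀ z ∉ T, g z = c z := by
  simp only [eraseCoord, forall_mem_image]
  intro h hh z hz
  rcases eq_or_ne z x with rfl | hzx
  · exact Function.update_self ..
  · rw [Function.update_of_ne hzx]
    exact hH h hh z (by simp [hzx, hz])

variable [Fintype Y]

/-- The values at `x` that turn `g` into a member of `H`. -/
def coordExtensions (H : Finset (X → Y)) (x : X) (g : X → Y) : Finset Y :=
  {y | Function.update g x y ∈ H}

/-- The link of `S` at `x`: the functions of `eraseCoord H x y₀` that extend to a member of `H` by
each of the values in `S`. -/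
def coordLink (H : Finset (X → Y)) (x : X) (y₀ : Y) (S : Finset Y) : Finset (X → Y) :=
  {g ∈ eraseCoord H x y₀ | S ⊆ coordExtensions H x g}

lemma mem_coordExtensions {H : Finset (X → Y)} {x : X} {g : X → Y} {y : Y} :
    y ∈ coordExtensions H x g ↔ Function.update g x y ∈ H := by
  simp [coordExtensions]

variable (H : Finset (X → Y)) (x : X) (y₀ : Y)

lemma card_le_sum_card_coordExtensions :
    #H ≤ ∑ g ∈ eraseCoord H x y₀, #(coordExtensions H x g) := by
  rw [card_eq_sum_card_fiberwise (f := fun h ↦ Function.update h x y₀) (t := eraseCoord H x y₀)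
    fun h hh ↦ mem_image_of_mem _ hh]
  refine sum_le_sum fun g _ ↦ card_le_card_of_injOn (fun h ↦ h x) ?_ ?_
  · intro h hh
    obtain ⟨hH, rfl⟩ := mem_filter.1 hh
    simpa [mem_coordExtensions] using hH
  · intro h hh h' hh' hx
    have h_update : Function.update h x y₀ = Function.update h' x y₀ :=
      (mem_filter.1 hh).2.trans (mem_filter.1 hh').2.symm
    calc h = Function.update (Function.update h x y₀) x (h x) := by simp
      _ = Function.update (Function.update h' x y₀) x (h' x) :=
        congrArg₂ (Function.update · x ·) h_update hx
      _ = h' := by simp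

lemma sum_card_coordLink_eq_sum_choose (k : ℕ) :
    ∑ S ∈ powersetCard k univ, #(coordLink H x y₀ S) =
      ∑ g ∈ eraseCoord H x y₀, (#(coordExtensions H x g)).choose k := by
  calc ∑ S ∈ powersetCard k univ, #(coordLink H x y₀ S)
      = ∑ g ∈ eraseCoord H x y₀, #{S ∈ powersetCard k univ | S ⊆ coordExtensions H x g} :=
        sum_card_bipartiteAbove_eq_sum_card_bipartiteBelow fun S g ↦ S ⊆ coordExtensions H x g
    _ = ∑ g ∈ eraseCoord H x y₀, #(powersetCard k (coordExtensions H x g)) := by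
        refine sum_congr rfl fun g _ ↦ congrArg card ?_
        ext S
        simp [mem_powersetCard, and_comm]
    _ = ∑ g ∈ eraseCoord H x y₀, (#(coordExtensions H x g)).choose k := by
        simp only [card_powersetCard]

lemma card_le_mul_card_eraseCoord_add_sum_card_coordLink (j : ℕ) :
    #H ≤ j * #(eraseCoord H x y₀) + ∑ S ∈ powersetCard (j + 1) univ, #(coordLink H x y₀ S) := by
  calc #H ≤ ∑ g ∈ eraseCoord H x y₀, #(coordExtensions H x g) :=
        card_le_sum_card_coordExtensions H x y₀
    _ ≤ ∑ g ∈ eraseCoord H x y₀, (j + (#(coordExtensions H x g)).choose (j + 1)) :=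
        sum_le_sum fun g _ ↦ le_add_choose_succ _ j
    _ = j * #(eraseCoord H x y₀) + ∑ S ∈ powersetCard (j + 1) univ, #(coordLink H x y₀ S) := by
        rw [sum_add_distrib, sum_const, smul_eq_mul, mul_comm, sum_card_coordLink_eq_sum_choose]

end EraseCoordinate

section ShatteredCubes

variable {X Y : Type*}

/-- `H` shatters the box `∏ a ∈ A, Z a`: every function on `A` lying in the box is the restriction
of a member of `H`. Only the values of `Z` on `A` matter. -/
def ShattersBox (H : Finset (X → Y)) (A : Finset X) (Z : X → Finset Y) : Prop :=
  ∀ f : X → Y, (∀ a ∈ A, f a ∈ Z a) → ∃ h ∈ H, ∀ a ∈ A, h a = f a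

variable [Fintype X] [DecidableEq X] [Fintype Y] {H : Finset (X → Y)} {k : ℕ}

open scoped Classical in
/-- The `k`-cubes with base `A` that are shattered by `H`. A cube is encoded by the function giving
its sides, extended by `∅` outside `A` so that distinct functions are distinct cubes. -/
noncomputable def shatteredCubes (H : Finset (X → Y)) (k : ℕ) (A : Finset X) :
    Finset (X → Finset Y) :=
  {Z | (∀ a ∈ A, #(Z a) = k) ∧ (∀ a ∉ A, Z a = ∅) ∧ ShattersBox H A Z}

lemma mem_shatteredCubes {A : Finset X} {Z : X → Finset Y} :
    Z ∈ shatteredCubes H k A ↔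
      (∀ a ∈ A, #(Z a) = k) ∧ (∀ a ∉ A, Z a = ∅) ∧ ShattersBox H A Z := by
  simp [shatteredCubes]

lemma kShatters_of_mem_shatteredCubes {A : Finset X} {Z : X → Finset Y}
    (hZ : Z ∈ shatteredCubes H k A) : kShatters H k A :=
  ⟨Z, (mem_shatteredCubes.1 hZ).1, (mem_shatteredCubes.1 hZ).2.2⟩

lemma shatteredCubes_eq_empty_of_kDim_lt {A : Finset X} (hA : kDim H k < #A) :
    shatteredCubes H k A = ∅ :=
  eq_empty_of_forall_notMem fun _ hZ ↦ hA.not_ge (kShatters_of_mem_shatteredCubes hZ).card_le_kDim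

lemma card_shatteredCubes_le (H : Finset (X → Y)) (k : ℕ) (A : Finset X) :
    #(shatteredCubes H k A) ≤ (Fintype.card Y).choose k ^ #A := by
  let sides (a : X) : Finset (Finset Y) := if a ∈ A then powersetCard k univ else {∅}
  have h_subset : shatteredCubes H k A ⊆ Fintype.piFinset sides := by
    intro Z hZ
    obtain ⟨hcard, hempty, -⟩ := mem_shatteredCubes.1 hZ
    rw [Fintype.mem_piFinset]
    intro a
    by_cases ha : a ∈ A <;> simp [sides, ha, hcard, hempty]
  calc #(shatteredCubes H k A) ≤ ∏ a, #(sides a) :=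
        (card_le_card h_subset).trans_eq (Fintype.card_piFinset _)
    _ = (Fintype.card Y).choose k ^ #A := by
        simp [sides, apply_ite card]

lemma one_le_card_shatteredCubes_empty (hH : H.Nonempty) (k : ℕ) :
    1 ≤ #(shatteredCubes H k ∅) := by
  obtain ⟨h, hh⟩ := hH
  refine card_pos.2 ⟨fun _ ↦ ∅, mem_shatteredCubes.2 ⟨by simp, by simp, ?_⟩⟩
  exact fun _ _ ↦ ⟨h, hh, by simp⟩

variable [DecidableEq Y] {x : X} {y₀ : Y} {A : Finset X}

lemma shatteredCubes_eraseCoord_subset (hx : x ∉ A) :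
    shatteredCubes (eraseCoord H x y₀) k A ⊆ shatteredCubes H k A := by
  intro Z hZ
  obtain ⟨hcard, hempty, hbox⟩ := mem_shatteredCubes.1 hZ
  refine mem_shatteredCubes.2 ⟨hcard, hempty, fun f hf ↦ ?_⟩
  obtain ⟨g, hg, hgf⟩ := hbox f hf
  obtain ⟨h, hh, rfl⟩ := mem_image.1 hg
  refine ⟨h, hh, fun a ha ↦ ?_⟩
  rw [← hgf a ha, Function.update_of_ne (ne_of_mem_of_not_mem ha hx)]

lemma ShattersBox.insert_of_coordLink {S : Finset Y} {Z : X → Finset Y} (hx : x ∉ A)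
    (hZ : ShattersBox (coordLink H x y₀ S) A Z) :
    ShattersBox H (insert x A) (Function.update Z x S) := by
  intro f hf
  rw [forall_mem_insert, Function.update_self] at hf
  have hne : ∀ a ∈ A, a ≠ x := fun a ha ↦ ne_of_mem_of_not_mem ha hx
  obtain ⟨g, hg, hgf⟩ := hZ f fun a ha ↦ by simpa [hne a ha] using hf.2 a ha
  refine ⟨Function.update g x (f x), mem_coordExtensions.1 ((mem_filter.1 hg).2 hf.1), ?_⟩
  rw [forall_mem_insert]
  exact ⟨Function.update_self .., fun a ha ↦ by rw [Function.update_of_ne (hne a ha), hgf a ha]⟩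

lemma update_mem_shatteredCubes_insert {S : Finset Y} {Z : X → Finset Y} (hx : x ∉ A)
    (hS : #S = k) (hZ : Z ∈ shatteredCubes (coordLink H x y₀ S) k A) :
    Function.update Z x S ∈ shatteredCubes H k (insert x A) := by
  obtain ⟨hcard, hempty, hbox⟩ := mem_shatteredCubes.1 hZ
  refine mem_shatteredCubes.2 ⟨?_, ?_, hbox.insert_of_coordLink hx⟩
  · rw [forall_mem_insert, Function.update_self]
    refine ⟨hS, fun a ha ↦ ?_⟩
    rw [Function.update_of_ne (ne_of_mem_of_not_mem ha hx), hcard a ha]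
  · intro a ha
    rw [mem_insert, not_or] at ha
    rw [Function.update_of_ne ha.1, hempty a ha.2]

lemma sum_card_shatteredCubes_coordLink_le (hx : x ∉ A) :
    ∑ S ∈ powersetCard k univ, #(shatteredCubes (coordLink H x y₀ S) k A) ≤
      #(shatteredCubes H k (insert x A)) := by
  rw [card_eq_sum_card_fiberwise (f := fun Z ↦ Z x) (t := powersetCard k univ)]
  · refine sum_le_sum fun S hS ↦ card_le_card_of_injOn (fun Z ↦ Function.update Z x S) ?_ ?_
    · intro Z hZ
      simpa using update_mem_shatteredCubes_insert hx (mem_powersetCard.1 hS).2 hZ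
    · intro Z hZ Z' hZ' hupdate
      have hZx : Z x = Z' x := by
        rw [(mem_shatteredCubes.1 hZ).2.1 x hx, (mem_shatteredCubes.1 hZ').2.1 x hx]
      calc Z = Function.update (Function.update Z x S) x (Z x) := by simp
        _ = Function.update (Function.update Z' x S) x (Z' x) :=
          congrArg₂ (Function.update · x ·) hupdate hZx
        _ = Z' := by simp
  · intro Z hZ
    simpa [mem_powersetCard] using (mem_shatteredCubes.1 hZ).1 x (mem_insert_self x A)

end ShatteredCubes

section Bounds

variable {X Y : Type*} [Fintype X] [Fintype Y]

/-- The number of `(j + 1)`-cubes shattered by `H` whose base `A` is contained in `T`, each counted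
with weight `j ^ |T \ A|`. -/
noncomputable def cubeWeight [DecidableEq X] (H : Finset (X → Y)) (j : ℕ) (T : Finset X) : ℕ :=
  ∑ A ∈ T.powerset, #(shatteredCubes H (j + 1) A) * j ^ #(T \ A)

section Recursion

variable [DecidableEq X] [DecidableEq Y] {x : X} {T : Finset X}

lemma mul_cubeWeight_eraseCoord_le (H : Finset (X → Y)) (y₀ : Y) (j : ℕ) (hx : x ∉ T) :
    j * cubeWeight (eraseCoord H x y₀) j T ≤
      ∑ A ∈ T.powerset, #(shatteredCubes H (j + 1) A) * j ^ #(insert x T \ A) := by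
  rw [cubeWeight, mul_sum]
  refine sum_le_sum fun A hA ↦ ?_
  have hxA : x ∉ A := notMem_mono (mem_powerset.1 hA) hx
  have hxTA : x ∉ T \ A := notMem_mono sdiff_subset hx
  calc j * (#(shatteredCubes (eraseCoord H x y₀) (j + 1) A) * j ^ #(T \ A))
      ≤ j * (#(shatteredCubes H (j + 1) A) * j ^ #(T \ A)) := by
        gcongr
        exact shatteredCubes_eraseCoord_subset hxA
    _ = #(shatteredCubes H (j + 1) A) * j ^ #(insert x T \ A) := by
        rw [insert_sdiff_of_notMem _ hxA, card_insert_of_notMem hxTA]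
        ring

lemma sum_cubeWeight_coordLink_le (H : Finset (X → Y)) (y₀ : Y) (j : ℕ) (hx : x ∉ T) :
    ∑ S ∈ powersetCard (j + 1) univ, cubeWeight (coordLink H x y₀ S) j T ≤
      ∑ A ∈ T.powerset,
        #(shatteredCubes H (j + 1) (insert x A)) * j ^ #(insert x T \ insert x A) := by
  simp only [cubeWeight]
  rw [sum_comm]
  refine sum_le_sum fun A hA ↦ ?_
  rw [← sum_mul, insert_sdiff_insert, sdiff_insert_of_notMem hx]
  gcongr
  exact sum_card_shatteredCubes_coordLink_le (notMem_mono (mem_powerset.1 hA) hx)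

lemma cubeWeight_eraseCoord_add_coordLink_le (H : Finset (X → Y)) (y₀ : Y) (j : ℕ) (hx : x ∉ T) :
    j * cubeWeight (eraseCoord H x y₀) j T +
        ∑ S ∈ powersetCard (j + 1) univ, cubeWeight (coordLink H x y₀ S) j T ≤
      cubeWeight H j (insert x T) :=
  (add_le_add (mul_cubeWeight_eraseCoord_le H y₀ j hx)
    (sum_cubeWeight_coordLink_le H y₀ j hx)).trans_eq (sum_powerset_insert hx _).symm

end Recursion

lemma card_le_cubeWeight_of_eq_of_notMem [DecidableEq X] {c : X → Y} {T : Finset X}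
    {H : Finset (X → Y)} (hH : ∀ h ∈ H, ∀ z ∉ T, h z = c z) (j : ℕ) :
    #H ≤ cubeWeight H j T := by
  classical
  induction T using Finset.induction_on generalizing H with
  | empty =>
    rcases H.eq_empty_or_nonempty with rfl | hne
    · exact Nat.zero_le _
    · have hH_card : #H ≤ 1 := card_le_one.2 fun h hh h' hh' ↦ funext fun z ↦
        (hH h hh z (notMem_empty z)).trans (hH h' hh' z (notMem_empty z)).symm
      simpa [cubeWeight] using hH_card.trans (one_le_card_shatteredCubes_empty hne (j + 1))
  | insert x T hx ih =>
    have hE := eraseCoord_eq_of_notMem hH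
    calc #H ≤ j * #(eraseCoord H x (c x)) +
            ∑ S ∈ powersetCard (j + 1) univ, #(coordLink H x (c x) S) :=
          card_le_mul_card_eraseCoord_add_sum_card_coordLink H x (c x) j
      _ ≤ j * cubeWeight (eraseCoord H x (c x)) j T +
            ∑ S ∈ powersetCard (j + 1) univ, cubeWeight (coordLink H x (c x) S) j T := by
          gcongr with S
          · exact ih hE
          · exact ih fun g hg ↦ hE g (mem_filter.1 hg).1
      _ ≤ cubeWeight H j (insert x T) := cubeWeight_eraseCoord_add_coordLink_le H (c x) j hx

lemma card_le_cubeWeight_univ [DecidableEq X] (H : Finset (X → Y)) (j : ℕ) :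
    #H ≤ cubeWeight H j univ := by
  rcases H.eq_empty_or_nonempty with rfl | ⟨c, -⟩
  · exact Nat.zero_le _
  · exact card_le_cubeWeight_of_eq_of_notMem (c := c) (by simp) j

lemma card_le_sum_kDim (H : Finset (X → Y)) (j : ℕ) :
    #H ≤ ∑ i ∈ range (kDim H (j + 1) + 1),
      (Fintype.card X).choose i * (Fintype.card Y).choose (j + 1) ^ i *
        j ^ (Fintype.card X - i) := by
  classical
  set d := kDim H (j + 1)
  set n := Fintype.card X
  set C := (Fintype.card Y).choose (j + 1)
  let weight (A : Finset X) : ℕ := #(shatteredCubes H (j + 1) A) * j ^ #(univ \ A)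
  have weight_eq_zero {A : Finset X} (hA : d < #A) : weight A = 0 := by
    simp [weight, shatteredCubes_eq_empty_of_kDim_lt hA]
  have weight_le (A : Finset X) : weight A ≤ C ^ #A * j ^ (n - #A) := by
    rw [← card_univ_sdiff]
    exact Nat.mul_le_mul_right _ (card_shatteredCubes_le H (j + 1) A)
  calc #H ≤ ∑ A ∈ univ.powerset, weight A := card_le_cubeWeight_univ H j
    _ = ∑ i ∈ range (n + 1), ∑ A ∈ powersetCard i univ, weight A := by
        rw [sum_powerset, card_univ]
    _ = ∑ i ∈ range (d + 1), ∑ A ∈ powersetCard i univ, weight A := by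
        refine (sum_subset (range_subset_range.2 ?_) fun i _ hi ↦ sum_eq_zero fun A hA ↦ ?_).symm
        · exact Nat.succ_le_succ (kDim_le_card H (j + 1))
        · rw [mem_range_succ_iff, not_le, ← (mem_powersetCard.1 hA).2] at hi
          exact weight_eq_zero hi
    _ ≤ ∑ i ∈ range (d + 1), n.choose i * C ^ i * j ^ (n - i) := by
        gcongr with i
        calc ∑ A ∈ powersetCard i univ, weight A
            ≤ #(powersetCard i (univ : Finset X)) • (C ^ i * j ^ (n - i)) :=
              sum_le_card_nsmul _ _ _ fun A hA ↦ (mem_powersetCard.1 hA).2 ▸ weight_le A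
          _ = n.choose i * C ^ i * j ^ (n - i) := by
              rw [card_powersetCard, card_univ, smul_eq_mul, mul_assoc]

end Bounds

/-- Generalized Sauer–Shelah Lemma, second inequality. -/
theorem generalized_sauer_shelah_second {X Y : Type*} [Fintype X] [Fintype Y]
    (H : Finset (X → Y)) (k : ℕ) (hk : 2 ≤ k) (hkY : k ≤ Fintype.card Y) :
    H.card ≤ (Fintype.card X) ^ (kDim H k) * (Fintype.card Y) ^ (k * kDim H k) *
      (k - 1) ^ (Fintype.card X) := by
  obtain ⟨j, rfl⟩ : ∃ j, k = j + 1 := ⟨k - 1, by omega⟩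
  set d := kDim H (j + 1)
  set n := Fintype.card X
  set m := Fintype.card Y
  calc #H ≤ ∑ i ∈ range (d + 1), n.choose i * m.choose (j + 1) ^ i * j ^ (n - i) :=
        card_le_sum_kDim H j
    _ ≤ n ^ d * (2 * m.choose (j + 1)) ^ d * j ^ n :=
        sum_choose_mul_pow_le (kDim_le_card H _) (Nat.choose_pos hkY) (by omega)
    _ ≤ n ^ d * (m ^ (j + 1)) ^ d * j ^ n := by
        gcongr
        exact two_mul_choose_le_pow m hk
    _ = n ^ d * m ^ ((j + 1) * d) * (j + 1 - 1) ^ n := by rw [pow_mul, Nat.add_sub_cancel]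
end

section
/- Existence of a class with good XOS approximation and no large shattered pair: Let X and Y be finite sets with |X| = m and |Y| = n, and let 2 ≤ l ≤ n be an integer dividing n with 8(l−1)·ln(n) ≥ 2l. Then there exists a class H ⊆ Y^X such that: (i) for every collection {v_y}_{y∈Y} of XOS valuations on X and every partition {S_y}_{y∈Y} of X, there exists f ∈ H with Σ_{y∈Y} v_y(f⁻¹(y)) ≥ ((l−1)/l) · Σ_{y∈Y} v_y(S_y); and (ii) there is no pair S ⊆ X, A ⊆ Y with |S| ≥ 8(l−1)·ln(n) and |A| > 24(l−1)·ln(m) that is shattered by H. -/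
open Finset

/-- An XOS valuation: the maximum of finitely many nonnegative additive valuations. -/
def IsXOS {X : Type*} (v : Finset X → ℝ) : Prop :=
  ∃ (r : ℕ) (w : Fin (r + 1) → X → ℝ), (∀ j x, 0 ≤ w j x) ∧
    ∀ S : Finset X, v S = Finset.univ.sup' Finset.univ_nonempty (fun j => ∑ x ∈ S, w j x)

/-- `S` is a partition of `X` indexed by `Y`. -/
def IsPartitionFam {X Y : Type*} (S : Y → Finset X) : Prop :=
  (∀ y y' : Y, y ≠ y' → Disjoint (S y) (S y')) ∧ ∀ x : X, ∃ y : Y, x ∈ S y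

/-! Colour the item-agent pairs with `l` colours and let the class consist of the allocations that
miss some colour, items given to a fixed default agent `y₀` being ignored. Handing to `y₀` all items
of one colour turns an arbitrary allocation into a member of the class, and by averaging some colour
carries at most `1 / l` of the welfare. Conversely, if every colour is frequent on `S × A`, then
counting the maps `S → A` that miss a given colour yields one that meets all colours, so `S`, `A` is
not shattered as soon as `y₀ ∉ A`. By a Chernoff bound and a union bound over all `S`, `A` of the
critical sizes, some colouring makes every colour frequent on every such `S × A`. -/

section Counting

lemma exists_mem_forall_not_of_card_mul_card_lt {α β : Type*} {C : Finset α} {P : Finset β}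
    (bad : β → α → Prop) [∀ p, DecidablePred (bad p)] (hC : C.Nonempty)
    (h : ∀ p ∈ P, #P * #{c ∈ C | bad p c} < #C) : ∃ c ∈ C, ∀ p ∈ P, ¬ bad p c := by
  classical
  rcases P.eq_empty_or_nonempty with rfl | hP
  · obtain ⟨c, hc⟩ := hC
    exact ⟨c, hc, by simp⟩
  by_contra! hbad
  have hcover : C ⊆ P.biUnion fun p ↦ {c ∈ C | bad p c} := by
    intro c hc
    obtain ⟨p, hp, hpc⟩ := hbad c hc
    exact mem_biUnion.2 ⟨p, hp, mem_filter.2 ⟨hc, hpc⟩⟩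
  have hlt : ∑ p ∈ P, #P * #{c ∈ C | bad p c} < ∑ _p ∈ P, #C := sum_lt_sum_of_nonempty hP h
  rw [← mul_sum, sum_const, smul_eq_mul] at hlt
  exact (lt_of_mul_lt_mul_left' hlt).not_ge ((card_le_card hcover).trans card_biUnion_le)

variable {Z κ : Type*} [Fintype Z] [DecidableEq Z] [Fintype κ] [DecidableEq κ]

lemma sum_pow_card_filter_eq {R : Type*} [CommRing R] (T : Finset Z) (i : κ) (r : R) :
    ∑ c : Z → κ, r ^ #{z ∈ T | c z = i} =
      (Fintype.card κ - 1 + r) ^ #T * (Fintype.card κ : R) ^ #Tᶜ := by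
  have hfactor (z : Z) : ∑ j : κ, (if z ∈ T ∧ j = i then r else 1) =
      if z ∈ T then Fintype.card κ - 1 + r else (Fintype.card κ : R) := by
    split_ifs with hz
    · have hterm (j : κ) : (if z ∈ T ∧ j = i then r else 1) = 1 + if j = i then r - 1 else 0 := by
        split_ifs <;> simp_all
      simp only [hterm, sum_add_distrib, sum_ite_eq', mem_univ, if_true, sum_const, card_univ,
        nsmul_one]
      ring
    · simp [hz]
  calc ∑ c : Z → κ, r ^ #{z ∈ T | c z = i}
      = ∑ c : Z → κ, ∏ z, (if z ∈ T ∧ c z = i then r else 1) := by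
        refine sum_congr rfl fun c _ ↦ ?_
        rw [prod_ite, prod_const, prod_const_one, mul_one, ← filter_filter, filter_univ_mem]
    _ = ∏ z, ∑ j : κ, (if z ∈ T ∧ j = i then r else 1) := by
        simp_rw [prod_univ_sum, Fintype.piFinset_univ]
    _ = _ := by
        simp only [hfactor, prod_ite, prod_const, filter_not, filter_univ_mem,
          compl_eq_univ_sdiff]

lemma card_colorings_card_color_le_le (T : Finset Z) (i : κ) (t : ℝ) {s : ℝ} (hs : 0 ≤ s) :
    (#{c : Z → κ | (#{z ∈ T | c z = i} : ℝ) ≤ t} : ℝ) ≤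
      Fintype.card κ ^ Fintype.card Z *
        Real.exp (s * t - (1 - Real.exp (-s)) * #T / Fintype.card κ) := by
  have hκ : (1 : ℝ) ≤ Fintype.card κ := mod_cast Fintype.card_pos_iff.2 ⟨i⟩
  have hbase : (Fintype.card κ : ℝ) - 1 + Real.exp (-s) ≤
      Fintype.card κ * Real.exp (-((1 - Real.exp (-s)) / Fintype.card κ)) := by
    refine le_trans (le_of_eq ?_) (mul_le_mul_of_nonneg_left
      (Real.one_sub_le_exp_neg ((1 - Real.exp (-s)) / Fintype.card κ)) (by linarith))
    field_simp
    ring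
  -- Markov's inequality for the exponential moment `exp (-s * count)`.
  have hmarkov (c : Z → κ) : (if (#{z ∈ T | c z = i} : ℝ) ≤ t then (1 : ℝ) else 0) ≤
      Real.exp (s * t) * Real.exp (-s) ^ #{z ∈ T | c z = i} := by
    split_ifs with hc
    · rw [← Real.exp_nat_mul, ← Real.exp_add]
      exact Real.one_le_exp (by nlinarith)
    · positivity
  calc (#{c : Z → κ | (#{z ∈ T | c z = i} : ℝ) ≤ t} : ℝ)
      ≤ Real.exp (s * t) * ∑ c : Z → κ, Real.exp (-s) ^ #{z ∈ T | c z = i} := by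
        rw [card_filter, mul_sum]
        push_cast
        exact sum_le_sum fun c _ ↦ hmarkov c
    _ ≤ Real.exp (s * t) * ((Fintype.card κ *
          Real.exp (-((1 - Real.exp (-s)) / Fintype.card κ))) ^ #T *
          (Fintype.card κ : ℝ) ^ #Tᶜ) := by
        rw [sum_pow_card_filter_eq]
        have : 0 ≤ (Fintype.card κ : ℝ) - 1 + Real.exp (-s) := by positivity [Real.exp_pos (-s)]
        gcongr
    _ = _ := by
        have hexp : Real.exp (s * t - (1 - Real.exp (-s)) * #T / Fintype.card κ) =
            Real.exp (s * t) * Real.exp (#T * -((1 - Real.exp (-s)) / Fintype.card κ)) := by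
          rw [← Real.exp_add]
          ring_nf
        rw [hexp, mul_pow, ← Real.exp_nat_mul, ← card_add_card_compl T, pow_add]
        ring

end Counting

section Rainbow

variable {X Y κ : Type*}

lemma prod_card_filter_not_le [Fintype X] (A : Finset Y) (p : X → Y → Prop)
    [∀ x, DecidablePred (p x)] :
    ∏ x, (#{y ∈ A | ¬ p x y} : ℝ) ≤
      #A ^ Fintype.card X * Real.exp (-((∑ x, (#{y ∈ A | p x y} : ℝ)) / #A)) := by
  have hfactor (x : X) :
      (#{y ∈ A | ¬ p x y} : ℝ) ≤ #A * Real.exp (-(#{y ∈ A | p x y} / #A : ℝ)) := by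
    rcases A.eq_empty_or_nonempty with rfl | hA
    · simp
    have hA₀ : (#A : ℝ) ≠ 0 := mod_cast hA.card_pos.ne'
    have hsplit : (#{y ∈ A | p x y} : ℝ) + #{y ∈ A | ¬ p x y} = #A :=
      mod_cast card_filter_add_card_filter_not (s := A) (p x)
    calc (#{y ∈ A | ¬ p x y} : ℝ) = #A * (1 - #{y ∈ A | p x y} / #A) := by
          rw [mul_one_sub, mul_div_cancel₀ _ hA₀]
          linarith
      _ ≤ _ := by
          gcongr
          exact Real.one_sub_le_exp_neg _
  calc ∏ x, (#{y ∈ A | ¬ p x y} : ℝ)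
      ≤ ∏ x, #A * Real.exp (-(#{y ∈ A | p x y} / #A : ℝ)) :=
        prod_le_prod (fun _ _ ↦ Nat.cast_nonneg _) fun x _ ↦ hfactor x
    _ = _ := by
        rw [prod_mul_distrib, prod_const, ← Real.exp_sum, sum_neg_distrib, sum_div, card_univ]

lemma exists_forall_mem_surjective_color [Fintype X] [Fintype κ] [Nonempty κ] [DecidableEq κ]
    (c : X → Y → κ) (A : Finset Y)
    (h : ∀ i, #A * Real.log (Fintype.card κ) < ∑ x, (#{y ∈ A | c x y = i} : ℝ)) :
    ∃ g : X → Y, (∀ x, g x ∈ A) ∧ Function.Surjective fun x ↦ c x (g x) := by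
  classical
  have hA : A.Nonempty := by
    rw [nonempty_iff_ne_empty]
    rintro rfl
    simp at h
  have hA' : (0 : ℝ) < #A := mod_cast hA.card_pos
  have hκ : (0 : ℝ) < Fintype.card κ := mod_cast Fintype.card_pos
  have hmiss (i : κ) : ({g ∈ Fintype.piFinset fun _ : X ↦ A | ∀ x, c x (g x) ≠ i} : Finset _) =
      Fintype.piFinset fun x ↦ {y ∈ A | c x y ≠ i} := by
    ext g
    simp [forall_and]
  have hfew (i : κ) : Fintype.card κ *
      (#{g ∈ Fintype.piFinset fun _ : X ↦ A | ∀ x, c x (g x) ≠ i} : ℝ) <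
        #(Fintype.piFinset fun _ : X ↦ A) := by
    rw [hmiss, Fintype.card_piFinset, Fintype.card_piFinset, prod_const,
      card_univ]
    push_cast
    calc Fintype.card κ * ∏ x, (#{y ∈ A | c x y ≠ i} : ℝ)
        ≤ Fintype.card κ * (#A ^ Fintype.card X *
            Real.exp (-((∑ x, (#{y ∈ A | c x y = i} : ℝ)) / #A))) := by
          gcongr
          exact prod_card_filter_not_le A fun x y ↦ c x y = i
      _ < Fintype.card κ * (#A ^ Fintype.card X * Real.exp (-Real.log (Fintype.card κ))) := by
          gcongr
          rw [lt_div_iff₀' hA']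
          exact h i
      _ = #A ^ Fintype.card X := by
          rw [Real.exp_neg, Real.exp_log hκ]
          field_simp
  obtain ⟨g, hg, hhit⟩ := exists_mem_forall_not_of_card_mul_card_lt (P := (univ : Finset κ))
    (fun i g ↦ ∀ x, c x (g x) ≠ i) (Fintype.piFinset_nonempty.2 fun _ ↦ hA)
    fun i _ ↦ mod_cast hfew i
  exact ⟨g, Fintype.mem_piFinset.1 hg, fun i ↦ by simpa using hhit i (mem_univ i)⟩

end Rainbow

section RandomColoring

variable {X Y κ : Type*} [Fintype X] [Fintype Y] [Fintype κ] [DecidableEq κ]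

lemma exists_coloring_forall_lt_sum_card [Nonempty κ] (k a : ℕ) (t : ℝ) {s : ℝ} (hs : 0 ≤ s)
    (h : (Fintype.card X).choose k * (Fintype.card Y).choose a * Fintype.card κ *
      Real.exp (s * t - (1 - Real.exp (-s)) * (k * a) / Fintype.card κ) < 1) :
    ∃ c : X → Y → κ, ∀ (S : Finset X) (A : Finset Y), #S = k → #A = a →
      ∀ i, t < ∑ x ∈ S, (#{y ∈ A | c x y = i} : ℝ) := by
  classical
  let P := powersetCard k (univ : Finset X) ×ˢ powersetCard a (univ : Finset Y) ×ˢ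
    (univ : Finset κ)
  have hfew : ∀ p ∈ P, #P * #{c : X × Y → κ | (#{z ∈ p.1 ×ˢ p.2.1 | c z = p.2.2} : ℝ) ≤ t} <
      #(univ : Finset (X × Y → κ)) := by
    rintro ⟨S, A, i⟩ hp
    simp only [P, mem_product, mem_powersetCard, subset_univ, mem_univ, true_and,
      and_true] at hp
    have htail := card_colorings_card_color_le_le (S ×ˢ A) i t hs
    rw [card_product, hp.1, hp.2] at htail
    push_cast at htail
    have hpos : (0 : ℝ) < Fintype.card κ ^ Fintype.card (X × Y) := by positivity
    rw [← Nat.cast_lt (α := ℝ)]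
    simp only [P, card_product, card_powersetCard, card_univ, Fintype.card_fun]
    push_cast
    calc _ ≤ _ := mul_le_mul_of_nonneg_left htail (by positivity)
      _ = Fintype.card κ ^ Fintype.card (X × Y) *
          ((Fintype.card X).choose k * (Fintype.card Y).choose a * Fintype.card κ *
            Real.exp (s * t - (1 - Real.exp (-s)) * (k * a) / Fintype.card κ)) := by ring
      _ < _ := mul_lt_of_lt_one_right hpos h
  obtain ⟨c, -, hc⟩ := exists_mem_forall_not_of_card_mul_card_lt _ univ_nonempty hfew
  refine ⟨fun x y ↦ c (x, y), fun S A hS hA i ↦ ?_⟩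
  have hlt := not_le.1 (hc (S, A, i) (by simp [P, mem_powersetCard, hS, hA]))
  simpa only [card_filter, sum_product, Nat.cast_sum] using hlt

lemma union_bound_exponent_lt {l u w q k a : ℝ} (hl : 2 ≤ l) (hu : 1 ≤ u) (hw : 0 < w)
    (hqw : q ≤ w) (hk : 8 * (l - 1) * w ≤ k) (ha : 23 * (l - 1) * u ≤ a) :
    k * u + a * w + q + a * q < 5 / 8 * (k * a / l) := by
  have hL : 0 < l - 1 := by linarith
  have hk0 : 0 < k := lt_of_lt_of_le (by positivity) hk
  have ha23 : 23 ≤ a := by nlinarith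
  have hu' : u ≤ a / (23 * (l - 1)) := (le_div_iff₀' (by positivity)).2 ha
  have hw' : w ≤ k / (8 * (l - 1)) := (le_div_iff₀' (by positivity)).2 hk
  have hcell : 0 < k * a / (l - 1) := by positivity
  calc k * u + a * w + q + a * q
      ≤ k * u + a * w + w + a * w := by gcongr
    _ ≤ k * u + a * w + a * w / 23 + a * w := by
        gcongr
        nlinarith
    _ ≤ k * (a / (23 * (l - 1))) + a * (k / (8 * (l - 1))) + a * (k / (8 * (l - 1))) / 23 +
          a * (k / (8 * (l - 1))) := by gcongr
    _ = (1 / 23 + 1 / 8 + 1 / 184 + 1 / 8) * (k * a / (l - 1)) := by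
        field_simp
        ring
    _ < 5 / 16 * (k * a / (l - 1)) :=
        mul_lt_mul_of_pos_right (by norm_num) hcell
    _ = 5 / 8 * (k * a / (2 * (l - 1))) := by
        field_simp
        norm_num
    _ ≤ 5 / 8 * (k * a / l) := by
        gcongr
        linarith

lemma natCast_choose_le_exp {n : ℕ} (hn : 0 < n) (k : ℕ) :
    (n.choose k : ℝ) ≤ Real.exp (k * Real.log n) := by
  rw [Real.exp_nat_mul, Real.exp_log (mod_cast hn)]
  exact mod_cast Nat.choose_le_pow n k

lemma exists_coloring_card_mul_log_lt_sum_card {k a : ℕ} (hκ : 2 ≤ Fintype.card κ)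
    (hκY : Fintype.card κ ≤ Fintype.card Y) (hX : 1 ≤ Real.log (Fintype.card X))
    (hk : 8 * ((Fintype.card κ : ℝ) - 1) * Real.log (Fintype.card Y) ≤ k)
    (ha : 23 * ((Fintype.card κ : ℝ) - 1) * Real.log (Fintype.card X) ≤ a) :
    ∃ c : X → Y → κ, ∀ (S : Finset X) (A : Finset Y), #S = k → #A = a →
      ∀ i, a * Real.log (Fintype.card κ) < ∑ x ∈ S, (#{y ∈ A | c x y = i} : ℝ) := by
  have : Nonempty κ := Fintype.card_pos_iff.1 (by omega)
  set m := Fintype.card X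
  set n := Fintype.card Y
  set l := Fintype.card κ
  have hlR : (2 : ℝ) ≤ l := mod_cast hκ
  have hlnR : (l : ℝ) ≤ n := mod_cast hκY
  have hm0 : 0 < m := by
    rw [Nat.pos_iff_ne_zero]
    intro hm
    norm_num [hm] at hX
  have hexp : 5 / 8 ≤ 1 - Real.exp (-1) := by
    rw [Real.exp_neg, le_sub_comm]
    exact (inv_anti₀ (by norm_num) Real.exp_one_gt_d9.le).trans (by norm_num)
  have hexponent : k * Real.log m + a * Real.log n + Real.log l + a * Real.log l <
      5 / 8 * (k * a / l) :=
    union_bound_exponent_lt hlR hX (Real.log_pos (by linarith))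
      (Real.log_le_log (by linarith) hlnR) hk ha
  refine exists_coloring_forall_lt_sum_card k a _ zero_le_one ?_
  calc m.choose k * n.choose a * l * Real.exp (1 * (a * Real.log l) -
        (1 - Real.exp (-1)) * (k * a) / l)
      ≤ Real.exp (k * Real.log m) * Real.exp (a * Real.log n) * Real.exp (Real.log l) *
          Real.exp (1 * (a * Real.log l) - 5 / 8 * (k * a) / l) := by
        gcongr
        · exact natCast_choose_le_exp hm0 k
        · exact natCast_choose_le_exp (by omega) a
        · exact (Real.exp_log (by linarith)).ge
    _ = Real.exp (k * Real.log m + a * Real.log n + Real.log l + a * Real.log l -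
          5 / 8 * (k * a / l)) := by
        simp only [← Real.exp_add]
        ring_nf
    _ < 1 := Real.exp_lt_one_iff.2 (sub_neg.2 hexponent)

end RandomColoring

section Valuations

variable {X Y : Type*}

lemma IsXOS.exists_supporting_weight {v : Finset X → ℝ} (hv : IsXOS v) (S : Finset X) :
    ∃ w : X → ℝ, (∀ x, 0 ≤ w x) ∧ v S = ∑ x ∈ S, w x ∧ ∀ T, ∑ x ∈ T, w x ≤ v T := by
  obtain ⟨r, w, hw, hvw⟩ := hv
  obtain ⟨j, -, hj⟩ := exists_mem_eq_sup' univ_nonempty fun j ↦ ∑ x ∈ S, w j x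
  refine ⟨w j, hw j, by rw [hvw, hj], fun T ↦ ?_⟩
  rw [hvw]
  exact le_sup' (fun j ↦ ∑ x ∈ T, w j x) (mem_univ j)

lemma IsPartitionFam.exists_allocation {S : Y → Finset X} (hS : IsPartitionFam S) :
    ∃ s : X → Y, ∀ x y, x ∈ S y ↔ s x = y := by
  choose s hs using hS.2
  refine ⟨s, fun x y ↦ ⟨fun hx ↦ ?_, fun h ↦ h ▸ hs x⟩⟩
  by_contra hne
  exact disjoint_left.1 (hS.1 _ _ hne) (hs x) hx

lemma sum_sum_filter_eq_sum_apply {M : Type*} [AddCommMonoid M] [Fintype X] [Fintype Y]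
    [DecidableEq Y] (f : X → Y) (w : Y → X → M) :
    ∑ y, ∑ x with f x = y, w y x = ∑ x, w (f x) x := by
  rw [← sum_fiberwise univ f]
  exact sum_congr rfl fun y _ ↦ sum_congr rfl fun x hx ↦ by rw [(mem_filter.1 hx).2]

lemma exists_color_mul_sum_le_sum_filter_ne {κ : Type*} [Fintype X] [Fintype κ] [Nonempty κ]
    [DecidableEq κ] (c : X → κ) (h : X → ℝ) :
    ∃ i, ((Fintype.card κ : ℝ) - 1) / Fintype.card κ * ∑ x, h x ≤ ∑ x with c x ≠ i, h x := by
  have hκ : (Fintype.card κ : ℝ) ≠ 0 := mod_cast Fintype.card_ne_zero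
  obtain ⟨i, hi⟩ := Fintype.exists_sum_fiber_le_of_sum_le_nsmul (f := c) (w := h)
    (b := (∑ x, h x) / Fintype.card κ) (by rw [nsmul_eq_mul, mul_div_cancel₀ _ hκ])
  refine ⟨i, ?_⟩
  calc ((Fintype.card κ : ℝ) - 1) / Fintype.card κ * ∑ x, h x
      = ∑ x, h x - (∑ x, h x) / Fintype.card κ := by
        field_simp
    _ ≤ ∑ x, h x - ∑ x with c x = i, h x := by gcongr
    _ = ∑ x with c x ≠ i, h x := sub_eq_of_eq_add' (sum_filter_add_sum_filter_not _ _ _).symm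

end Valuations

section AvoidingClass

variable {X Y κ : Type*}

/-- The allocations that, away from the default agent `y₀`, miss some colour of the colouring `c`
of item-agent pairs. In any allocation, handing to `y₀` the items of one chosen colour gives a
member of this class. -/
def avoidingClass (c : X → Y → κ) (y₀ : Y) : Set (X → Y) :=
  {f | ∃ i, ∀ x, f x ≠ y₀ → c x (f x) ≠ i}

/-- The pair `S`, `A` is shattered by the class `H`: every map `S → A`, represented by its
extensions to all of `X`, is the restriction of a member of `H`. -/
def ShattersPair (H : Set (X → Y)) (S : Finset X) (A : Finset Y) : Prop :=
  ∀ g : X → Y, (∀ x ∈ S, g x ∈ A) → ∃ f ∈ H, ∀ x ∈ S, f x = g x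

lemma ShattersPair.mono {H : Set (X → Y)} {S S' : Finset X} {A A' : Finset Y}
    (h : ShattersPair H S A) (hS : S' ⊆ S) (hA : A' ⊆ A) (hne : A'.Nonempty) :
    ShattersPair H S' A' := by
  classical
  intro g hg
  obtain ⟨b, hb⟩ := hne
  obtain ⟨f, hf, hfg⟩ := h (S'.piecewise g fun _ ↦ b) fun x _ ↦ by
    by_cases hx : x ∈ S' <;> simp [hx, hA (hg x _), hA hb]
  exact ⟨f, hf, fun x hx ↦ by rw [hfg x (hS hx), piecewise_eq_of_mem _ _ _ hx]⟩

lemma exists_mem_avoidingClass_welfare_ge [Fintype X] [Fintype Y] [DecidableEq Y] [Fintype κ]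
    [Nonempty κ] (c : X → Y → κ) (y₀ : Y) {v : Y → Finset X → ℝ} (hv : ∀ y, IsXOS (v y))
    {S : Y → Finset X} (hS : IsPartitionFam S) :
    ∃ f ∈ avoidingClass c y₀, ((Fintype.card κ : ℝ) - 1) / Fintype.card κ * ∑ y, v y (S y) ≤
      ∑ y, v y {x | f x = y} := by
  classical
  choose w hw0 hwS hwv using fun y ↦ (hv y).exists_supporting_weight (S y)
  obtain ⟨s, hs⟩ := hS.exists_allocation
  obtain ⟨i, hi⟩ := exists_color_mul_sum_le_sum_filter_ne (fun x ↦ c x (s x)) fun x ↦ w (s x) x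
  have hwelfare : ∑ y, v y (S y) = ∑ x, w (s x) x := by
    rw [← sum_sum_filter_eq_sum_apply]
    refine sum_congr rfl fun y _ ↦ ?_
    rw [hwS]
    congr 1
    ext x
    simp [hs]
  let f : X → Y := fun x ↦ if c x (s x) = i then y₀ else s x
  refine ⟨f, ⟨i, fun x hx ↦ ?_⟩, ?_⟩
  · by_cases hc : c x (s x) = i <;> simp_all [f]
  calc ((Fintype.card κ : ℝ) - 1) / Fintype.card κ * ∑ y, v y (S y)
      ≤ ∑ x with c x (s x) ≠ i, w (s x) x := by rwa [hwelfare]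
    _ = ∑ x with c x (s x) ≠ i, w (f x) x :=
        sum_congr rfl fun x hx ↦ by rw [show f x = s x from if_neg (mem_filter.1 hx).2]
    _ ≤ ∑ x, w (f x) x :=
        sum_le_sum_of_subset_of_nonneg (filter_subset _ _) fun x _ _ ↦ hw0 _ x
    _ = ∑ y, ∑ x with f x = y, w y x := (sum_sum_filter_eq_sum_apply f w).symm
    _ ≤ ∑ y, v y {x | f x = y} := sum_le_sum fun y _ ↦ hwv y _

lemma not_shattersPair_avoidingClass [Fintype κ] [Nonempty κ] [DecidableEq κ] {c : X → Y → κ}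
    {y₀ : Y} {S : Finset X} {A : Finset Y} (hy₀ : y₀ ∉ A)
    (h : ∀ i, #A * Real.log (Fintype.card κ) < ∑ x ∈ S, (#{y ∈ A | c x y = i} : ℝ)) :
    ¬ ShattersPair (avoidingClass c y₀) S A := by
  intro hshat
  obtain ⟨g, hgA, hg⟩ := exists_forall_mem_surjective_color (fun (x : S) y ↦ c x y) A
    fun i ↦ by simpa only [sum_coe_sort S fun x ↦ (#{y ∈ A | c x y = i} : ℝ)] using h i
  obtain ⟨f, ⟨i, hfi⟩, hfg⟩ := hshat (Function.extend Subtype.val g fun _ ↦ y₀) fun x hx ↦ by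
    rw [Subtype.val_injective.extend_apply g _ ⟨x, hx⟩]
    exact hgA _
  obtain ⟨x, rfl⟩ := hg i
  have hfx : f x = g x := by rw [hfg x x.2, Subtype.val_injective.extend_apply]
  exact hfi x (hfx ▸ fun h₀ ↦ hy₀ (h₀ ▸ hgA x)) (by rw [hfx])

lemma one_le_log_card_and_le_card_of_large_pair [Fintype X] [Fintype Y] [Nontrivial Y] {l : ℕ}
    (hl : 2 ≤ l) {S : Finset X} {A : Finset Y}
    (hS : 8 * ((l : ℝ) - 1) * Real.log (Fintype.card Y) ≤ #S)
    (hA : 24 * ((l : ℝ) - 1) * Real.log (Fintype.card X) < #A) :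
    1 ≤ Real.log (Fintype.card X) ∧ l ≤ Fintype.card Y := by
  have hlR : (2 : ℝ) ≤ l := mod_cast hl
  have hSX : (#S : ℝ) ≤ Fintype.card X := mod_cast card_le_univ S
  have hAY : (#A : ℝ) ≤ Fintype.card Y := mod_cast card_le_univ A
  have hY : Real.log 2 ≤ Real.log (Fintype.card Y) :=
    Real.log_le_log two_pos (mod_cast Fintype.one_lt_card)
  have hX : (3 : ℝ) ≤ Fintype.card X := by nlinarith [Real.log_two_gt_d9]
  have hlogX : 1 ≤ Real.log (Fintype.card X) :=
    (Real.le_log_iff_exp_le (by linarith)).2 (Real.exp_one_lt_three.le.trans hX)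
  exact ⟨hlogX, by exact_mod_cast (by nlinarith : (l : ℝ) ≤ Fintype.card Y)⟩

lemma exists_coloring_forall_not_shattersPair [Fintype X] [Fintype Y] [Nontrivial Y] (y₀ : Y)
    {l : ℕ} (hl : 2 ≤ l) :
    ∃ c : X → Y → Fin l, ∀ (S : Finset X) (A : Finset Y),
      8 * ((l : ℝ) - 1) * Real.log (Fintype.card Y) ≤ #S →
      24 * ((l : ℝ) - 1) * Real.log (Fintype.card X) < #A →
      ¬ ShattersPair (avoidingClass c y₀) S A := by
  classical
  have : NeZero l := ⟨by omega⟩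
  have hlR : (2 : ℝ) ≤ l := mod_cast hl
  by_cases hsize : 1 ≤ Real.log (Fintype.card X) ∧ l ≤ Fintype.card Y
  swap
  · exact ⟨0, fun S A hS hA ↦ absurd (one_le_log_card_and_le_card_of_large_pair hl hS hA) hsize⟩
  obtain ⟨hX, hlY⟩ := hsize
  obtain ⟨c, hc⟩ := exists_coloring_card_mul_log_lt_sum_card (X := X) (Y := Y) (κ := Fin l)
    (by rwa [Fintype.card_fin]) (by rwa [Fintype.card_fin]) hX (Nat.le_ceil _) (Nat.le_ceil _)
  rw [Fintype.card_fin] at hc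
  refine ⟨c, fun S A hS hA hshat ↦ ?_⟩
  -- Giving up the default agent lowers the constant from `24` to `23`.
  have herase : 23 * ((l : ℝ) - 1) * Real.log (Fintype.card X) ≤ #(A.erase y₀) := by
    have : (#A : ℝ) ≤ #(A.erase y₀) + 1 := mod_cast Nat.sub_le_iff_le_add.1 pred_card_le_card_erase
    nlinarith
  obtain ⟨S', hS'S, hS'⟩ := exists_subset_card_eq (Nat.ceil_le.2 hS)
  obtain ⟨A', hA'A, hA'⟩ := exists_subset_card_eq (Nat.ceil_le.2 herase)
  have hA'ne : A'.Nonempty := by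
    rw [← card_pos, hA', Nat.ceil_pos]
    nlinarith
  refine not_shattersPair_avoidingClass (fun h ↦ notMem_erase y₀ A (hA'A h)) (fun i ↦ ?_)
    (hshat.mono hS'S (hA'A.trans (erase_subset _ _)) hA'ne)
  rw [Fintype.card_fin, hA']
  exact hc S' A' hS' hA' i

end AvoidingClass

theorem exists_class_xos_approx_no_shattering_general {X Y : Type*} [Fintype X] [Fintype Y]
    [Nontrivial Y] [DecidableEq Y] {l : ℕ} (hl : 2 ≤ l) :
    ∃ H : Set (X → Y),
      (∀ v : Y → Finset X → ℝ, (∀ y, IsXOS (v y)) →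
        ∀ S : Y → Finset X, IsPartitionFam S →
          ∃ f ∈ H, (((l : ℝ) - 1) / l) * ∑ y, v y (S y) ≤ ∑ y, v y {x | f x = y}) ∧
      ¬ ∃ (S : Finset X) (A : Finset Y),
          8 * ((l : ℝ) - 1) * Real.log (Fintype.card Y) ≤ #S ∧
          24 * ((l : ℝ) - 1) * Real.log (Fintype.card X) < #A ∧ ShattersPair H S A := by
  have : NeZero l := ⟨by omega⟩
  let y₀ : Y := Classical.arbitrary Y
  obtain ⟨c, hc⟩ := exists_coloring_forall_not_shattersPair (X := X) y₀ hl
  refine ⟨avoidingClass c y₀, fun v hv S hS ↦ ?_, fun ⟨S, A, hS, hA, hshat⟩ ↦ hc S A hS hA hshat⟩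
  simpa only [Fintype.card_fin] using exists_mem_avoidingClass_welfare_ge c y₀ hv hS

/-- Existence of a class of allocations with an `l/(l-1)` approximation ratio for XOS
valuations admitting no large shattered pair. -/
theorem exists_class_xos_approx_no_shattering {X Y : Type*} [Fintype X] [Fintype Y]
    [DecidableEq Y] (m n l : ℕ) (hm : Fintype.card X = m) (hn : Fintype.card Y = n)
    (hl2 : 2 ≤ l) (hln : l ≤ n) (hdvd : l ∣ n)
    (hcond : (2 * l : ℝ) ≤ 8 * ((l : ℝ) - 1) * Real.log n) :
    ∃ H : Set (X → Y),
      (∀ v : Y → Finset X → ℝ, (∀ y, IsXOS (v y)) →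
        ∀ S : Y → Finset X, IsPartitionFam S →
          ∃ f ∈ H, (((l : ℝ) - 1) / (l : ℝ)) * (∑ y : Y, v y (S y)) ≤
            ∑ y : Y, v y (Finset.univ.filter (fun x => f x = y))) ∧
      ¬ ∃ (S : Finset X) (A : Finset Y),
          8 * ((l : ℝ) - 1) * Real.log n ≤ (S.card : ℝ) ∧
          24 * ((l : ℝ) - 1) * Real.log m < (A.card : ℝ) ∧
          ∀ g : X → Y, (∀ x ∈ S, g x ∈ A) → ∃ f ∈ H, ∀ x ∈ S, f x = g x := by
  have : Nontrivial Y := Fintype.one_lt_card_iff_nontrivial.1 (by omega)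
  subst hm hn
  exact exists_class_xos_approx_no_shattering_general hl2
end
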